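/- Let (u, u^[1]) and (v, v^[1]) be pairs of functions ℝ → ℂ such that u(x) = u(c) + ∫_c^x u^[1](t)/p̄(t) dt and u^[1](x) = u^[1](c) + ∫_{(c,x]} h_u(t) dσ_κ(t) for all c, x ∈ ℝ with h_u locally dσ_κ-integrable, and similarly for (v, v^[1]) with density h_v. Then for all x₁ ≤ x₂, W(u,v)(x₂) − W(u,v)(x₁) = ∫_{(x₁,x₂]} (u(t)·h_v(t) − v(t)·h_u(t)) dσ_κ(t) (Lagrange identity; equivalently, the Wronskian is locally absolutely continuous with respect to dσ_κ with Radon–Nikodym derivative u·h_v − v·h_u). -/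

import Mathlib

open MeasureTheory Set Filter
open scoped ENNReal NNReal Classical

/-- Forward shift of a time scale. -/
noncomputable def tsSigma (T : Set ℝ) (t : ℝ) : ℝ :=
  if ({s | s ∈ T ∧ t < s}).Nonempty then sInf {s | s ∈ T ∧ t < s} else sSup T

/-- Backward shift of a time scale. -/
noncomputable def tsRho (T : Set ℝ) (t : ℝ) : ℝ :=
  if ({s | s ∈ T ∧ s < t}).Nonempty then sSup {s | s ∈ T ∧ s < t} else sInf T

/-- `𝕋_κ` : the time scale with the left endpoint removed if it is finite and right-scattered. -/
noncomputable def tsKappa (T : Set ℝ) : Set ℝ :=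
  if BddBelow T ∧ sInf T < tsSigma T (sInf T) then T \ {sInf T} else T

/-- Extension `p̄` of a function on `𝕋_κ` to all of `ℝ`. -/
noncomputable def extK (T : Set ℝ) (p : ℝ → ℂ) (t : ℝ) : ℂ :=
  if t ∈ tsKappa T then p t else p (tsSigma (tsKappa T) t)

/-- Coercion of a real-valued coefficient to a complex-valued one. -/
def cR (f : ℝ → ℝ) : ℝ → ℂ := fun t => (f t : ℂ)

/-- `(u, u^[1])` is an integrated pair with density `h` against the measure `μ = dσ_κ`. -/
def IsPair (T : Set ℝ) (μ : Measure ℝ) (p : ℝ → ℂ) (u u1 h : ℝ → ℂ) : Prop :=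
  ∀ c x : ℝ, c ≤ x →
    u x = u c + ∫ t in c..x, u1 t / extK T p t ∧
    u1 x = u1 c + ∫ t in Set.Ioc c x, h t ∂μ

/-- `(u, u^[1])` is a solution pair of `(ℓ - z) u = g`. -/
def IsSLSol (T : Set ℝ) (μ : Measure ℝ) (p r q : ℝ → ℂ) (z : ℂ) (g : ℝ → ℂ)
    (u u1 : ℝ → ℂ) : Prop :=
  IsPair T μ p u u1 (fun t => (q t - z * r t) * u t - r t * g t)

/-- Wronskian of two pairs. -/
def Wr (u u1 v v1 : ℝ → ℂ) (x : ℝ) : ℂ := u x * v1 x - u1 x * v x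

/-- The integrand `|u|² r` as an `ℝ≥0∞`-valued function. -/
noncomputable def sqWeight (r : ℝ → ℝ) (u : ℝ → ℂ) (t : ℝ) : ℝ≥0∞ :=
  ((‖u t‖₊ : ℝ≥0∞)) ^ 2 * ENNReal.ofReal (r t)

/-- `u` lies in `L²` near the left endpoint `a`. -/
def L2NearLeft (T : Set ℝ) (μ : Measure ℝ) (r : ℝ → ℝ) (u : ℝ → ℂ) : Prop :=
  ∀ c ∈ tsKappa T, ∫⁻ t in {t | (∃ s ∈ T, s < t) ∧ t ≤ c} ∩ tsKappa T, sqWeight r u t ∂μ < ∞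

/-- `u` lies in `L²` near the right endpoint `b`. -/
def L2NearRight (T : Set ℝ) (μ : Measure ℝ) (r : ℝ → ℝ) (u : ℝ → ℂ) : Prop :=
  ∀ c ∈ tsKappa T, ∫⁻ t in {t | c ≤ t ∧ ∃ s ∈ T, t < s} ∩ tsKappa T, sqWeight r u t ∂μ < ∞

/-- `ℓ` is in the limit-circle case at the left endpoint. -/
def LimitCircleLeft (T : Set ℝ) (μ : Measure ℝ) (p r q : ℝ → ℝ) : Prop :=
  ∀ z : ℂ, ∀ u u1 : ℝ → ℂ, IsSLSol T μ (cR p) (cR r) (cR q) z 0 u u1 → L2NearLeft T μ r u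

/-- `ℓ` is in the limit-point case at the left endpoint. -/
def LimitPointLeft (T : Set ℝ) (μ : Measure ℝ) (p r q : ℝ → ℝ) : Prop :=
  ∀ z : ℂ, ∃ u u1 : ℝ → ℂ, IsSLSol T μ (cR p) (cR r) (cR q) z 0 u u1 ∧ ¬ L2NearLeft T μ r u

/-- `ℓ` is in the limit-circle case at the right endpoint. -/
def LimitCircleRight (T : Set ℝ) (μ : Measure ℝ) (p r q : ℝ → ℝ) : Prop :=
  ∀ z : ℂ, ∀ u u1 : ℝ → ℂ, IsSLSol T μ (cR p) (cR r) (cR q) z 0 u u1 → L2NearRight T μ r u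

/-- `ℓ` is in the limit-point case at the right endpoint. -/
def LimitPointRight (T : Set ℝ) (μ : Measure ℝ) (p r q : ℝ → ℝ) : Prop :=
  ∀ z : ℂ, ∃ u u1 : ℝ → ℂ, IsSLSol T μ (cR p) (cR r) (cR q) z 0 u u1 ∧ ¬ L2NearRight T μ r u

/-- The action `ℓ u = (-h + q u)/r` of the differential expression on a pair with density `h`. -/
noncomputable def ellApply (r q : ℝ → ℝ) (h u : ℝ → ℂ) (t : ℝ) : ℂ :=
  (-h t + (q t : ℂ) * u t) / (r t : ℂ)

/-- Membership in `L²(𝕋_κ; r dσ_κ)`. -/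
def MemL2T (T : Set ℝ) (μ : Measure ℝ) (r : ℝ → ℝ) (u : ℝ → ℂ) : Prop :=
  ∫⁻ t in tsKappa T, sqWeight r u t ∂μ < ∞

/-- The pair `(u, u^[1])` with density `h` belongs to `D_ℓ²`. -/
def MemD2 (T : Set ℝ) (μ : Measure ℝ) (p r q : ℝ → ℝ) (u u1 h : ℝ → ℂ) : Prop :=
  LocallyIntegrable h μ ∧ IsPair T μ (cR p) u u1 h ∧ MemL2T T μ r u ∧
    MemL2T T μ r (ellApply r q h u)

/-- The filter `x ↓ a`, `x ∈ 𝕋`. -/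
noncomputable def leftLimFilter (T : Set ℝ) : Filter ℝ :=
  if BddBelow T then nhdsWithin (sInf T) T else Filter.atBot ⊓ Filter.principal T

/-- The filter `x ↑ b`, `x ∈ 𝕋`. -/
noncomputable def rightLimFilter (T : Set ℝ) : Filter ℝ :=
  if BddAbove T then nhdsWithin (sSup T) T else Filter.atTop ⊓ Filter.principal T

/-- The measure `r dσ_κ` on `𝕋_κ`, giving the Hilbert space `L²(𝕋_κ; r dσ_κ)`. -/
noncomputable def wM (T : Set ℝ) (μ : Measure ℝ) (r : ℝ → ℝ) : Measure ℝ :=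
  (μ.restrict (tsKappa T)).withDensity fun t => ENNReal.ofReal (r t)


noncomputable def phiK (T : Set ℝ) (t : ℝ) : ℝ :=
  if t ∈ tsKappa T then t else tsSigma (tsKappa T) t

theorem extK_eq (T : Set ℝ) (p : ℝ → ℂ) (t : ℝ) : extK T p t = p (phiK T t) := by
  unfold extK phiK; split_ifs <;> rfl

theorem kappa_sub (T : Set ℝ) : tsKappa T ⊆ T := by
  unfold tsKappa; split_ifs
  · exact diff_subset
  · exact subset_rfl

theorem mem_kappa {T : Set ℝ} {s r : ℝ} (hs : s ∈ T) (hr : r ∈ T) (h : r < s) :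
    s ∈ tsKappa T := by
  unfold tsKappa; split_ifs with hb
  · refine ⟨hs, fun h' => ?_⟩
    have h1 : s = sInf T := h'
    have := csInf_le hb.1 hr
    linarith
  · exact hs

theorem phiK_mono (T : Set ℝ) : Monotone (phiK T) := by
  intro t t' htt
  rcases htt.eq_or_lt with rfl | hlt
  · exact le_rfl
  have bb : ∀ x, BddBelow {s | s ∈ tsKappa T ∧ x < s} := fun x => ⟨x, fun s hs => hs.2.le⟩
  have ba : ∀ x, ¬ ({s | s ∈ tsKappa T ∧ x < s}).Nonempty → ∀ s ∈ tsKappa T, s ≤ x := by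
    intro x hx s hs
    by_contra hc
    exact hx ⟨s, hs, not_le.1 hc⟩
  unfold phiK tsSigma
  by_cases h1 : t ∈ tsKappa T
  · rw [if_pos h1]
    by_cases h5 : t' ∈ tsKappa T
    · rw [if_pos h5]; exact htt
    rw [if_neg h5]
    by_cases h7 : ({s | s ∈ tsKappa T ∧ t' < s}).Nonempty
    · rw [if_pos h7]; exact htt.trans (le_csInf h7 fun s hs => hs.2.le)
    · rw [if_neg h7]; exact le_csSup ⟨t', ba t' h7⟩ h1
  rw [if_neg h1]
  by_cases h6 : ({s | s ∈ tsKappa T ∧ t < s}).Nonempty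
  · rw [if_pos h6]
    by_cases h5 : t' ∈ tsKappa T
    · rw [if_pos h5]; exact csInf_le (bb t) ⟨h5, hlt⟩
    rw [if_neg h5]
    by_cases h7 : ({s | s ∈ tsKappa T ∧ t' < s}).Nonempty
    · rw [if_pos h7]
      exact csInf_le_csInf (bb t) h7 (fun s hs => ⟨hs.1, hlt.trans hs.2⟩)
    · rw [if_neg h7]
      obtain ⟨s, hs⟩ := h6
      exact (csInf_le (bb t) hs).trans (le_csSup ⟨t', ba t' h7⟩ hs.1)
  · rw [if_neg h6]
    have h5 : t' ∉ tsKappa T := fun h5 => absurd (ba t h6 t' h5) (not_le.2 hlt)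
    have h7 : ¬ ({s | s ∈ tsKappa T ∧ t' < s}).Nonempty := by
      rintro ⟨s, hs⟩
      exact absurd (ba t h6 s hs.1) (not_le.2 (hlt.trans hs.2))
    rw [if_neg h5, if_neg h7]

def setA (T : Set ℝ) : Set ℝ := {t | (∃ s ∈ T, s < t) ∧ ∃ s ∈ tsKappa T, t ≤ s}

theorem setA_meas (T : Set ℝ) : MeasurableSet (setA T) := by
  apply Set.OrdConnected.measurableSet
  constructor
  rintro x ⟨⟨s, hs, hsx⟩, -⟩ y ⟨-, ⟨r, hr, hry⟩⟩ z ⟨hxz, hzy⟩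
  exact ⟨⟨s, hs, hsx.trans_le hxz⟩, r, hr, hzy.trans hry⟩

theorem phiK_spec {T : Set ℝ} (hcl : IsClosed T) {t s : ℝ} (hs : s ∈ tsKappa T) (hts : t ≤ s) :
    phiK T t ∈ T ∧ t ≤ phiK T t ∧ phiK T t ≤ s := by
  unfold phiK
  split_ifs with h
  · exact ⟨kappa_sub T h, le_rfl, hts⟩
  · have hlt : t < s := lt_of_le_of_ne hts (by rintro rfl; exact h hs)
    have hn : ({s | s ∈ tsKappa T ∧ t < s}).Nonempty := ⟨s, hs, hlt⟩
    have bb : BddBelow {s | s ∈ tsKappa T ∧ t < s} := ⟨t, fun s hs => hs.2.le⟩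
    unfold tsSigma
    rw [if_pos hn]
    refine ⟨?_, le_csInf hn fun s hs => hs.2.le, csInf_le bb ⟨hs, hlt⟩⟩
    have := csInf_mem_closure hn bb
    exact hcl.closure_subset_iff.2 (fun x hx => kappa_sub T hx.1) this

theorem le_rho {T : Set ℝ} {s d : ℝ} (hs : s ∈ T) (h : s < d) : s ≤ tsRho T d := by
  unfold tsRho
  rw [if_pos ⟨s, hs, h⟩]
  exact le_csSup ⟨d, fun x hx => hx.2.le⟩ ⟨hs, h⟩

theorem sub1 {T : Set ℝ} (hcl : IsClosed T) (c d : ℝ) :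
    phiK T ⁻¹' Ico c d ∩ setA T ⊆ Icc (tsRho T c) (tsRho T d) := by
  rintro t ⟨⟨h1, h2⟩, ⟨s, hs, hst⟩, r, hr, htr⟩
  obtain ⟨m, l, -⟩ := phiK_spec hcl hr htr
  refine ⟨?_, l.trans (le_rho m h2)⟩
  unfold tsRho
  split_ifs with hn
  · refine csSup_le hn fun x hx => ?_
    by_contra hc
    push Not at hc
    have hxK := mem_kappa hx.1 hs (hst.trans hc)
    have := (phiK_spec hcl hxK hc.le).2.2
    linarith [hx.2]
  · have : BddBelow T := ⟨c, fun x hx => by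
      by_contra hc
      exact hn ⟨x, hx, not_le.1 hc⟩⟩
    exact (csInf_le this hs).trans hst.le

theorem sub2 {T : Set ℝ} (hne : T.Nonempty) (hcl : IsClosed T) (c d : ℝ) (hcd : c ≤ d) :
    Ioo (tsRho T c) (tsRho T d) ⊆ phiK T ⁻¹' Ico c d ∩ setA T := by
  rintro t ⟨h1, h2⟩
  have hd : ({s | s ∈ T ∧ s < d}).Nonempty := by
    by_contra hn
    have hn' : ¬ ({s | s ∈ T ∧ s < c}).Nonempty := fun ⟨x, hx⟩ => hn ⟨x, hx.1, hx.2.trans_le hcd⟩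
    unfold tsRho at h1 h2
    rw [if_neg hn'] at h1
    rw [if_neg hn] at h2
    linarith
  have h2' := h2
  unfold tsRho at h2'
  rw [if_pos hd] at h2'
  obtain ⟨s, hs, hts⟩ := exists_lt_of_lt_csSup hd h2'
  have hr : ∃ r ∈ T, r < t := by
    by_cases hc : ({s | s ∈ T ∧ s < c}).Nonempty
    · obtain ⟨x, hx⟩ := hc
      exact ⟨x, hx.1, (le_rho hx.1 hx.2).trans_lt h1⟩
    · unfold tsRho at h1
      rw [if_neg hc] at h1
      exact exists_lt_of_csInf_lt hne h1
  obtain ⟨r, hr, hrt⟩ := hr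
  have hsK := mem_kappa hs.1 hr (hrt.trans hts)
  obtain ⟨m, l, k⟩ := phiK_spec hcl hsK hts.le
  refine ⟨⟨?_, k.trans_lt hs.2⟩, ⟨r, hr, hrt⟩, s, hsK, hts.le⟩
  by_contra hc
  have := le_rho m (not_le.1 hc)
  linarith

theorem phiK_mp {T : Set ℝ} (hne : T.Nonempty) (hcl : IsClosed T) (ν : Measure ℝ)
    (hν : ∀ c d : ℝ, c ≤ d → ν (Set.Ico c d) = ENNReal.ofReal (tsRho T d - tsRho T c)) :
    MeasurePreserving (phiK T) (volume.restrict (setA T)) ν := by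
  refine ⟨(phiK_mono T).measurable, ?_⟩
  symm
  refine Measure.ext_of_Ico' _ _ ?_ ?_
  · intro a b hab
    rw [hν a b hab.le]; exact ENNReal.ofReal_ne_top
  · intro a b hab
    have hm := (phiK_mono T).measurable (measurableSet_Ico (a := a) (b := b))
    rw [Measure.map_apply (phiK_mono T).measurable measurableSet_Ico, Measure.restrict_apply hm,
      hν a b hab.le]
    apply le_antisymm
    · rw [← Real.volume_Ioo]; exact measure_mono (sub2 hne hcl a b hab.le)
    · rw [← Real.volume_Icc]; exact measure_mono (sub1 hcl a b)

theorem ext_int {T : Set ℝ} (hne : T.Nonempty) (hcl : IsClosed T) (ν : Measure ℝ)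
    (hν : ∀ c d : ℝ, c ≤ d → ν (Set.Ico c d) = ENNReal.ofReal (tsRho T d - tsRho T c))
    (p : ℝ → ℂ) (hp : LocallyIntegrable (fun t => 1 / p t) ν) (c d : ℝ) :
    IntegrableOn (fun t => 1 / extK T p t) (Ioc c d) volume := by
  have hA : IntegrableOn (fun t => 1 / extK T p t) (setA T ∩ Ioc c d) volume := by
    have h1 := (phiK_mp hne hcl ν hν).restrict_preimage
      (measurableSet_Icc (a := phiK T c) (b := phiK T d))
    have h2 := h1.integrable_comp_of_integrable
      (hp.integrableOn_isCompact (isCompact_Icc (a := phiK T c) (b := phiK T d)))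
    rw [Measure.restrict_restrict ((phiK_mono T).measurable measurableSet_Icc)] at h2
    have h3 : IntegrableOn (fun t => 1 / extK T p t)
      (phiK T ⁻¹' Icc (phiK T c) (phiK T d) ∩ setA T) volume := by
      refine Integrable.congr h2 (Eventually.of_forall fun t => ?_)
      simp [extK_eq]
    refine h3.mono_set ?_
    rintro t ⟨h, h'⟩
    exact ⟨⟨phiK_mono T h'.1.le, phiK_mono T h'.2⟩, h⟩
  have hR : IntegrableOn (fun t => 1 / extK T p t) ({t | ∀ s ∈ tsKappa T, s < t} ∩ Ioc c d)
      volume := by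
    have hm : MeasurableSet ({t | ∀ s ∈ tsKappa T, s < t} ∩ Ioc c d) := by
      refine MeasurableSet.inter (Set.OrdConnected.measurableSet ⟨?_⟩) measurableSet_Ioc
      intro x hx y hy z hz s hs
      exact (hx s hs).trans_le hz.1
    have hc : IntegrableOn (fun _ : ℝ => 1 / p (sSup (tsKappa T)))
        ({t | ∀ s ∈ tsKappa T, s < t} ∩ Ioc c d) volume :=
      integrableOn_const (((measure_mono inter_subset_right).trans_lt
        (by simp : volume (Ioc c d) < ∞)).ne)
    refine hc.congr_fun (fun t ht => ?_) hm
    have h1 : t ∉ tsKappa T := fun h => lt_irrefl _ (ht.1 t h)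
    have h2 : ¬ ({s | s ∈ tsKappa T ∧ t < s}).Nonempty := fun ⟨s, hs⟩ =>
      lt_asymm hs.2 (ht.1 s hs.1)
    simp only [extK, if_neg h1, tsSigma, if_neg h2]
  have hL : IntegrableOn (fun t => 1 / extK T p t) ({t | ∀ s ∈ T, t ≤ s} ∩ Ioc c d)
      volume := by
    have hm : MeasurableSet ({t | ∀ s ∈ T, t ≤ s} ∩ Ioc c d) := by
      refine MeasurableSet.inter (Set.OrdConnected.measurableSet ⟨?_⟩) measurableSet_Ioc
      intro x hx y hy z hz s hs
      exact hz.2.trans (hy s hs)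
    have hc : IntegrableOn (fun _ : ℝ => 1 / p (if (tsKappa T).Nonempty then sInf (tsKappa T)
        else sSup (tsKappa T)))
        ({t | ∀ s ∈ T, t ≤ s} ∩ Ioc c d) volume :=
      integrableOn_const (((measure_mono inter_subset_right).trans_lt
        (by simp : volume (Ioc c d) < ∞)).ne)
    refine Integrable.congr hc ?_
    filter_upwards [ae_restrict_mem hm, ae_restrict_of_ae (Measure.ae_ne volume (sInf T))]
      with t ht htn
    have h0 : t ∉ T := fun h => htn (IsLeast.csInf_eq ⟨h, ht.1⟩).symm
    have h1 : t ∉ tsKappa T := fun h => h0 (kappa_sub T h)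
    have h2 : {s | s ∈ tsKappa T ∧ t < s} = tsKappa T := by
      ext s
      refine ⟨fun h => h.1, fun h => ⟨h, lt_of_le_of_ne (ht.1 s (kappa_sub T h)) ?_⟩⟩
      rintro rfl; exact h1 h
    simp only [extK, if_neg h1, tsSigma, h2]
  refine ((hA.union hR).union hL).mono_set ?_
  intro t ht
  by_cases h1 : ∃ s ∈ T, s < t
  · by_cases h2 : ∃ s ∈ tsKappa T, t ≤ s
    · exact Or.inl (Or.inl ⟨⟨h1, h2⟩, ht⟩)
    · push Not at h2
      exact Or.inl (Or.inr ⟨h2, ht⟩)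
  · push Not at h1
    exact Or.inr ⟨h1, ht⟩

theorem prod_int (μ : Measure ℝ) (P h : ℝ → ℂ) (a b : ℝ) (hfin : μ (Ioc a b) < ∞)
    (hP : IntegrableOn P (Ioc a b) volume) (hh : IntegrableOn h (Ioc a b) μ) :
    Integrable (fun z : ℝ × ℝ => {z : ℝ × ℝ | z.2 ≤ z.1}.indicator (fun z => P z.1 * h z.2) z)
      ((volume.restrict (Ioc a b)).prod (μ.restrict (Ioc a b))) := by
  haveI : IsFiniteMeasure (μ.restrict (Ioc a b)) := ⟨by simpa using hfin⟩
  exact (Integrable.mul_prod hP hh).indicator (measurableSet_le measurable_snd measurable_fst)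

theorem inner_snd (μ : Measure ℝ) (P h : ℝ → ℂ) (a b s : ℝ) (hs : s ∈ Ioc a b) :
    ∫ t in Ioc a b, {z : ℝ × ℝ | z.2 ≤ z.1}.indicator (fun z => P z.1 * h z.2) (s, t) ∂μ
      = P s * ∫ t in Ioc a s, h t ∂μ := by
  have : (fun t => {z : ℝ × ℝ | z.2 ≤ z.1}.indicator (fun z => P z.1 * h z.2) (s, t))
      = (Iic s).indicator (fun t => P s * h t) := by
    ext t; simp [indicator]
  rw [this, setIntegral_indicator measurableSet_Iic, integral_const_mul]
  congr 3
  ext t; simp only [mem_inter_iff, mem_Ioc, mem_Iic]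
  exact ⟨fun h => ⟨h.1.1, h.2⟩, fun h => ⟨⟨h.1, h.2.trans hs.2⟩, h.2⟩⟩

theorem inner_fst (P h : ℝ → ℂ) (a b t : ℝ) (ht : t ∈ Ioc a b) :
    ∫ s in Ioc a b, {z : ℝ × ℝ | z.2 ≤ z.1}.indicator (fun z => P z.1 * h z.2) (s, t)
      = (∫ s in t..b, P s) * h t := by
  have : (fun s => {z : ℝ × ℝ | z.2 ≤ z.1}.indicator (fun z => P z.1 * h z.2) (s, t))
      = (Ici t).indicator (fun s => P s * h t) := by
    ext t; simp [indicator]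
  rw [this, setIntegral_indicator measurableSet_Ici, integral_mul_const,
    intervalIntegral.integral_of_le ht.2, ← integral_Icc_eq_integral_Ioc]
  congr 3
  ext s; simp only [mem_inter_iff, mem_Ioc, mem_Icc, mem_Ici]
  exact ⟨fun h => ⟨h.2, h.1.2⟩, fun h => ⟨⟨ht.1.trans_le h.1, h.2⟩, h.1⟩⟩

/-- integrability of `P * w1` -/
theorem mul_int (μ : Measure ℝ) (P h w1 : ℝ → ℂ) (a b : ℝ) (hfin : μ (Ioc a b) < ∞)
    (hP : IntegrableOn P (Ioc a b) volume) (hh : IntegrableOn h (Ioc a b) μ)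
    (hw : ∀ x, a ≤ x → w1 x = w1 a + ∫ t in Ioc a x, h t ∂μ) :
    IntegrableOn (fun s => P s * w1 s) (Ioc a b) volume := by
  haveI : IsFiniteMeasure (μ.restrict (Ioc a b)) := ⟨by simpa using hfin⟩
  have h1 := (prod_int μ P h a b hfin hP hh).integral_prod_left
  have h2 := (hP.mul_const (w1 a)).add h1
  refine h2.congr ?_
  filter_upwards [ae_restrict_mem measurableSet_Ioc] with s hs
  simp only [Pi.add_apply]
  rw [inner_snd μ P h a b s hs, hw s hs.1.le]; ring

theorem parts (μ : Measure ℝ) (P h w w1 : ℝ → ℂ) (a b : ℝ) (hab : a ≤ b)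
    (hfin : μ (Ioc a b) < ∞)
    (hP : IntegrableOn P (Ioc a b) volume) (hh : IntegrableOn h (Ioc a b) μ)
    (hw1 : ∀ x, a ≤ x → w1 x = w1 a + ∫ t in Ioc a x, h t ∂μ)
    (hw : ∀ c x, c ≤ x → w x = w c + ∫ t in c..x, P t) :
    IntegrableOn (fun t => w t * h t) (Ioc a b) μ ∧
    w b * w1 b - w a * w1 a =
      ∫ t in Ioc a b, w t * h t ∂μ + ∫ s in Ioc a b, P s * w1 s := by
  haveI : IsFiniteMeasure (μ.restrict (Ioc a b)) := ⟨by simpa using hfin⟩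
  have hI := prod_int μ P h a b hfin hP hh
  have hl := hI.integral_prod_left
  have hr := hI.integral_prod_right
  have sw := integral_integral_swap (f := fun s t =>
    {z : ℝ × ℝ | z.2 ≤ z.1}.indicator (fun z => P z.1 * h z.2) (s, t)) hI
  have e1 : (fun s => P s * w1 s) =ᵐ[volume.restrict (Ioc a b)] fun s => P s * w1 a +
      ∫ t in Ioc a b, {z : ℝ × ℝ | z.2 ≤ z.1}.indicator (fun z => P z.1 * h z.2) (s, t) ∂μ := by
    filter_upwards [ae_restrict_mem measurableSet_Ioc] with s hs
    rw [inner_snd μ P h a b s hs, hw1 s hs.1.le]; ring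
  have e2 : (fun t => w t * h t) =ᵐ[μ.restrict (Ioc a b)] fun t => w b * h t -
      ∫ s in Ioc a b, {z : ℝ × ℝ | z.2 ≤ z.1}.indicator (fun z => P z.1 * h z.2) (s, t) := by
    filter_upwards [ae_restrict_mem measurableSet_Ioc] with t ht
    rw [inner_fst P h a b t ht, hw t b ht.2]; ring
  refine ⟨((hh.const_mul (w b)).sub hr).congr e2.symm, ?_⟩
  rw [integral_congr_ae e1, integral_congr_ae e2, integral_add (hP.mul_const _) hl,
    integral_sub (hh.const_mul _) hr, integral_mul_const, integral_const_mul, sw]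
  have k1 := hw1 b hab
  have k2 := hw a b hab
  rw [intervalIntegral.integral_of_le hab] at k2
  rw [k1, k2]; ring

/-- Lagrange identity: for two integrated pairs `(u, u^[1])`, `(v, v^[1])` with densities
`h_u`, `h_v` against `dσ_κ`, the Wronskian satisfies
`W(u,v)(x₂) - W(u,v)(x₁) = ∫_{(x₁,x₂]} (u h_v - v h_u) dσ_κ`. -/
theorem lagrange_identity_wronskian
    (T : Set ℝ) (hne : T.Nonempty) (hcl : IsClosed T)
    (hfive : ∃ s : Finset ℝ, ↑s ⊆ T ∧ 5 ≤ s.card)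
    (μ ν : Measure ℝ)
    (hμ : ∀ c d : ℝ, c ≤ d →
      μ (Set.Ioc c d) = ENNReal.ofReal (tsSigma (tsKappa T) d - tsSigma (tsKappa T) c))
    (hν : ∀ c d : ℝ, c ≤ d → ν (Set.Ico c d) = ENNReal.ofReal (tsRho T d - tsRho T c))
    (p : ℝ → ℂ) (hp : LocallyIntegrable (fun t => 1 / p t) ν)
    (u u1 hu v v1 hv : ℝ → ℂ)
    (hu' : LocallyIntegrable hu μ) (hv' : LocallyIntegrable hv μ)
    (hpu : IsPair T μ p u u1 hu) (hpv : IsPair T μ p v v1 hv) :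
    ∀ x₁ x₂ : ℝ, x₁ ≤ x₂ →
      Wr u u1 v v1 x₂ - Wr u u1 v v1 x₁ =
        ∫ t in Set.Ioc x₁ x₂, (u t * hv t - v t * hu t) ∂μ := by
  intro a b hab
  have hfin : μ (Ioc a b) < ∞ := by rw [hμ a b hab]; exact ENNReal.ofReal_lt_top
  have hP := ext_int hne hcl ν hν p hp a b
  have hhu : IntegrableOn hu (Ioc a b) μ :=
    (hu'.integrableOn_isCompact (isCompact_Icc (a := a) (b := b))).mono_set Ioc_subset_Icc_self
  have hhv : IntegrableOn hv (Ioc a b) μ :=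
    (hv'.integrableOn_isCompact (isCompact_Icc (a := a) (b := b))).mono_set Ioc_subset_Icc_self
  have hU := mul_int μ _ hu u1 a b hfin hP hhu fun x hx => (hpu a x hx).2
  have hV := mul_int μ _ hv v1 a b hfin hP hhv fun x hx => (hpv a x hx).2
  obtain ⟨i1, e1⟩ := parts μ (fun s => 1 / extK T p s * u1 s) hv u v1 a b hab hfin hU hhv
    (fun x hx => (hpv a x hx).2) (fun c x hx => by
      rw [(hpu c x hx).1]; congr 2; ext t; ring)
  obtain ⟨i2, e2⟩ := parts μ (fun s => 1 / extK T p s * v1 s) hu v u1 a b hab hfin hV hhu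
    (fun x hx => (hpu a x hx).2) (fun c x hx => by
      rw [(hpv c x hx).1]; congr 2; ext t; ring)
  have e3 : ∫ s in Ioc a b, 1 / extK T p s * u1 s * v1 s =
      ∫ s in Ioc a b, 1 / extK T p s * v1 s * u1 s := by
    congr 1; ext s; ring
  rw [integral_sub i1 i2]
  unfold Wr
  linear_combination e1 - e2 + e3
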